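/- There is an absolute constant C > 0 such that for every integer n ≥ 2, every ε ∈ (0, 1/2), and every positive semidefinite Hankel matrix H ∈ ℝ^{n×n}, there exists a Hankel matrix Ĥ ∈ ℝ^{n×n} of rank at most C·(ln n)·ln(1/ε) satisfying both ‖H − Ĥ‖₂ ≤ ε‖H‖₂ and ‖H − Ĥ‖_F ≤ ε‖H‖_F. -/

import Mathlib

open scoped BigOperators

/-- A matrix is Hankel if its entries depend only on the sum of the indices. -/
def IsHankel {n : ℕ} (A : Matrix (Fin n) (Fin n) ℝ) : Prop :=
  ∀ i j k l : Fin n, (i : ℕ) + (j : ℕ) = (k : ℕ) + (l : ℕ) → A i j = A k l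

/-- Euclidean (ℓ₂) norm of a vector. -/
noncomputable def euclNorm {n : ℕ} (x : Fin n → ℝ) : ℝ := Real.sqrt (∑ i, x i ^ 2)

/-- Spectral norm of a matrix: supremum of ‖Ax‖₂ over the Euclidean unit ball. -/
noncomputable def specNorm {n : ℕ} (A : Matrix (Fin n) (Fin n) ℝ) : ℝ :=
  ⨆ x : {x : Fin n → ℝ // euclNorm x ≤ 1}, euclNorm (A.mulVec x.1)

/-- Frobenius norm of a matrix. -/
noncomputable def froNorm {n : ℕ} (A : Matrix (Fin n) (Fin n) ℝ) : ℝ :=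
  Real.sqrt (∑ i, ∑ j, (A i j) ^ 2)

/-!
A positive definite Hankel matrix `H` is the moment matrix `∑ k, w k * x k ^ (i + j)` of a finite
positive measure: diagonalize `H` and its shift simultaneously. Reversing the order of the indices
replaces a node `x` by `x⁻¹`, and the sign change `(-1) ^ i` replaces it by `-x`; both are isometric
congruences preserving the Hankel structure. Since the spectral and Frobenius norms are monotone on
positive semidefinite matrices, the measure may be split accordingly, and it suffices to treat
nodes in `[0, 1]`.

For such `x`, let `z` be the dyadic node `1 - 2 ^ (-q)` with `q ≤ ⌈log₂ n⌉` just below `x`, and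
expand `x ^ m` at `z` up to order `p`. Summing the truncations over the nodes yields a Hankel matrix
of rank at most `p` per dyadic node. The error in `x ^ (i + j)` is at most
`3 * (2 / 3) ^ p * x ^ (⌊i / 4⌋ + ⌊j / 4⌋)`; as `i ↦ ⌊i / 4⌋` has fibres of size at most `4`, the
error matrix has norm at most `12 * (2 / 3) ^ p` times that of `H`. The semidefinite case follows by
a small perturbation, and `p` of order `log (1 / ε)` suffices.
-/

open Matrix

section MatrixNorms

variable {n : ℕ}

lemma euclNorm_sq (x : Fin n → ℝ) : euclNorm x ^ 2 = ∑ i, x i ^ 2 :=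
  Real.sq_sqrt (Finset.sum_nonneg fun _ _ => sq_nonneg _)

lemma euclNorm_eq_norm_toLp (x : Fin n → ℝ) : euclNorm x = ‖WithLp.toLp 2 x‖ := by
  simp [euclNorm, EuclideanSpace.norm_eq]

lemma specNorm_le_of_forall {A : Matrix (Fin n) (Fin n) ℝ} {c : ℝ} (hc : 0 ≤ c)
    (h : ∀ x, euclNorm (A *ᵥ x) ≤ c * euclNorm x) : specNorm A ≤ c := by
  have : Nonempty {x : Fin n → ℝ // euclNorm x ≤ 1} := ⟨⟨0, by simp [euclNorm]⟩⟩
  exact ciSup_le fun x => (h x).trans (mul_le_of_le_one_right hc x.2)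

section Spectral

open scoped Matrix.Norms.L2Operator

lemma euclNorm_mulVec_le_l2_opNorm (A : Matrix (Fin n) (Fin n) ℝ) (x : Fin n → ℝ) :
    euclNorm (A *ᵥ x) ≤ ‖A‖ * euclNorm x := by
  rw [euclNorm_eq_norm_toLp, euclNorm_eq_norm_toLp]
  exact A.l2_opNorm_mulVec (WithLp.toLp 2 x)

lemma specNorm_eq_l2_opNorm (A : Matrix (Fin n) (Fin n) ℝ) : specNorm A = ‖A‖ := by
  refine le_antisymm
    (specNorm_le_of_forall (norm_nonneg A) (euclNorm_mulVec_le_l2_opNorm A)) ?_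
  have bounded : BddAbove (Set.range fun x : {x : Fin n → ℝ // euclNorm x ≤ 1} =>
      euclNorm (A *ᵥ x.1)) := by
    refine ⟨‖A‖, ?_⟩
    rintro _ ⟨x, rfl⟩
    exact (euclNorm_mulVec_le_l2_opNorm A x).trans (mul_le_of_le_one_right (norm_nonneg A) x.2)
  rw [cstar_norm_def]
  refine ContinuousLinearMap.opNorm_le_of_unit_norm
    (Real.iSup_nonneg fun x => Real.sqrt_nonneg _) fun x hx => ?_
  have hx1 : euclNorm (WithLp.ofLp x) ≤ 1 := by simpa [euclNorm_eq_norm_toLp] using hx.le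
  simpa [specNorm, euclNorm_eq_norm_toLp, ← ofLp_toEuclideanCLM] using le_ciSup bounded ⟨_, hx1⟩

lemma specNorm_nonneg (A : Matrix (Fin n) (Fin n) ℝ) : 0 ≤ specNorm A := by
  simp only [specNorm_eq_l2_opNorm, norm_nonneg]

lemma euclNorm_mulVec_le (A : Matrix (Fin n) (Fin n) ℝ) (x : Fin n → ℝ) :
    euclNorm (A *ᵥ x) ≤ specNorm A * euclNorm x := by
  simpa only [specNorm_eq_l2_opNorm] using euclNorm_mulVec_le_l2_opNorm A x

lemma specNorm_mul_le (A B : Matrix (Fin n) (Fin n) ℝ) :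
    specNorm (A * B) ≤ specNorm A * specNorm B := by
  simpa only [specNorm_eq_l2_opNorm] using norm_mul_le A B

lemma specNorm_transpose (A : Matrix (Fin n) (Fin n) ℝ) : specNorm Aᵀ = specNorm A := by
  simpa only [specNorm_eq_l2_opNorm, conjTranspose_eq_transpose_of_trivial]
    using l2_opNorm_conjTranspose A

lemma specNorm_transpose_mul_self (A : Matrix (Fin n) (Fin n) ℝ) :
    specNorm (Aᵀ * A) = specNorm A ^ 2 := by
  simpa only [specNorm_eq_l2_opNorm, conjTranspose_eq_transpose_of_trivial, sq]
    using l2_opNorm_conjTranspose_mul_self A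

/-- The spectral norm as a bundled seminorm. -/
noncomputable def specSeminorm (n : ℕ) : Seminorm ℝ (Matrix (Fin n) (Fin n) ℝ) :=
  Seminorm.of specNorm
    (fun A B => by simpa only [specNorm_eq_l2_opNorm] using norm_add_le A B)
    (fun c A => by simpa only [specNorm_eq_l2_opNorm] using norm_smul c A)

lemma specNorm_pos {A : Matrix (Fin n) (Fin n) ℝ} (hA : A ≠ 0) : 0 < specNorm A := by
  simpa only [specNorm_eq_l2_opNorm, norm_pos_iff] using hA

lemma specNorm_diagonal_le {d : Fin n → ℝ} {c : ℝ} (hc : 0 ≤ c) (hd : ∀ i, |d i| ≤ c) :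
    specNorm (diagonal d) ≤ c := by
  rw [specNorm_eq_l2_opNorm, l2_opNorm_diagonal]
  exact (pi_norm_le_iff_of_nonneg hc).2 hd

end Spectral

lemma specNorm_sq_le_of_forall {A : Matrix (Fin n) (Fin n) ℝ} {c : ℝ} (hc : 0 ≤ c)
    (h : ∀ x, ∑ i, (A *ᵥ x) i ^ 2 ≤ c * ∑ i, x i ^ 2) : specNorm A ^ 2 ≤ c := by
  refine (Real.le_sqrt (specNorm_nonneg A) hc).1
    (specNorm_le_of_forall (Real.sqrt_nonneg c) fun x => ?_)
  rw [euclNorm, euclNorm, ← Real.sqrt_mul hc]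
  exact Real.sqrt_le_sqrt (h x)

lemma dotProduct_mulVec_le_specNorm (A : Matrix (Fin n) (Fin n) ℝ) (x : Fin n → ℝ) :
    x ⬝ᵥ A *ᵥ x ≤ specNorm A * ∑ i, x i ^ 2 := by
  calc x ⬝ᵥ A *ᵥ x ≤ euclNorm x * euclNorm (A *ᵥ x) := Real.sum_mul_le_sqrt_mul_sqrt _ _ _
    _ ≤ euclNorm x * (specNorm A * euclNorm x) :=
      mul_le_mul_of_nonneg_left (euclNorm_mulVec_le A x) (Real.sqrt_nonneg _)
    _ = specNorm A * ∑ i, x i ^ 2 := by rw [← euclNorm_sq]; ring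

lemma specNorm_le_of_abs_le {A B : Matrix (Fin n) (Fin n) ℝ} (h : ∀ i j, |A i j| ≤ B i j) :
    specNorm A ≤ specNorm B := by
  refine specNorm_le_of_forall (specNorm_nonneg B) fun x => ?_
  have entry_le (i : Fin n) : |(A *ᵥ x) i| ≤ (B *ᵥ fun j => |x j|) i := by
    simp only [mulVec, dotProduct]
    refine (Finset.abs_sum_le_sum_abs _ _).trans (Finset.sum_le_sum fun j _ => ?_)
    rw [abs_mul]
    exact mul_le_mul_of_nonneg_right (h i j) (abs_nonneg _)
  calc euclNorm (A *ᵥ x) ≤ euclNorm (B *ᵥ fun j => |x j|) :=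
        Real.sqrt_le_sqrt <| Finset.sum_le_sum fun i _ =>
          sq_le_sq.2 ((entry_le i).trans (le_abs_self _))
    _ ≤ specNorm B * euclNorm fun j => |x j| := euclNorm_mulVec_le _ _
    _ = specNorm B * euclNorm x := by simp only [euclNorm, sq_abs]

open scoped MatrixOrder in
lemma exists_eq_transpose_mul_self_of_posSemidef {m : Type*} [Fintype m] {A : Matrix m m ℝ}
    (hA : A.PosSemidef) : ∃ B : Matrix m m ℝ, A = Bᵀ * B := by
  classical
  obtain ⟨B, hB⟩ := CStarAlgebra.nonneg_iff_eq_star_mul_self.mp hA.nonneg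
  exact ⟨B, by rw [hB, star_eq_conjTranspose, conjTranspose_eq_transpose_of_trivial]⟩

lemma specNorm_le_add_of_posSemidef {A B : Matrix (Fin n) (Fin n) ℝ} (hA : A.PosSemidef)
    (hB : B.PosSemidef) : specNorm A ≤ specNorm (A + B) := by
  obtain ⟨C, rfl⟩ := exists_eq_transpose_mul_self_of_posSemidef hA
  rw [specNorm_transpose_mul_self]
  refine specNorm_sq_le_of_forall (specNorm_nonneg _) fun x => ?_
  calc ∑ i, (C *ᵥ x) i ^ 2 = x ⬝ᵥ (Cᵀ * C) *ᵥ x := by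
        rw [← mulVec_mulVec, dotProduct_mulVec, vecMul_transpose]
        simp only [dotProduct, sq]
    _ ≤ x ⬝ᵥ (Cᵀ * C + B) *ᵥ x := by
        rw [add_mulVec, dotProduct_add]
        simpa using hB.dotProduct_mulVec_nonneg x
    _ ≤ _ := dotProduct_mulVec_le_specNorm _ x

lemma froNorm_sq (A : Matrix (Fin n) (Fin n) ℝ) : froNorm A ^ 2 = ∑ i, ∑ j, A i j ^ 2 :=
  Real.sq_sqrt (Finset.sum_nonneg fun _ _ => Finset.sum_nonneg fun _ _ => sq_nonneg _)

lemma froNorm_nonneg (A : Matrix (Fin n) (Fin n) ℝ) : 0 ≤ froNorm A := Real.sqrt_nonneg _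

lemma froNorm_transpose (A : Matrix (Fin n) (Fin n) ℝ) : froNorm Aᵀ = froNorm A :=
  congrArg Real.sqrt Finset.sum_comm

lemma froNorm_sq_eq_trace (A : Matrix (Fin n) (Fin n) ℝ) : froNorm A ^ 2 = (A * Aᵀ).trace := by
  rw [froNorm_sq]
  simp only [trace, diag_apply, mul_apply, transpose_apply, sq]

lemma froNorm_sq_eq_sum_col (A : Matrix (Fin n) (Fin n) ℝ) :
    froNorm A ^ 2 = ∑ j, euclNorm (A.col j) ^ 2 := by
  simp only [froNorm_sq, euclNorm_sq, col_apply]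
  exact Finset.sum_comm

section Frobenius

open scoped Matrix.Norms.Frobenius

lemma froNorm_eq_frobenius_norm (A : Matrix (Fin n) (Fin n) ℝ) : froNorm A = ‖A‖ := by
  simp [froNorm, frobenius_norm_def, Real.sqrt_eq_rpow]

/-- The Frobenius norm as a bundled seminorm. -/
noncomputable def froSeminorm (n : ℕ) : Seminorm ℝ (Matrix (Fin n) (Fin n) ℝ) :=
  Seminorm.of froNorm
    (fun A B => by simpa only [froNorm_eq_frobenius_norm] using norm_add_le A B)
    (fun c A => by simpa only [froNorm_eq_frobenius_norm] using norm_smul c A)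

lemma froNorm_pos {A : Matrix (Fin n) (Fin n) ℝ} (hA : A ≠ 0) : 0 < froNorm A := by
  simpa only [froNorm_eq_frobenius_norm, norm_pos_iff] using hA

end Frobenius

lemma froNorm_le_of_abs_le {A B : Matrix (Fin n) (Fin n) ℝ} (h : ∀ i j, |A i j| ≤ B i j) :
    froNorm A ≤ froNorm B :=
  Real.sqrt_le_sqrt <| Finset.sum_le_sum fun i _ => Finset.sum_le_sum fun j _ =>
    sq_le_sq.2 ((h i j).trans (le_abs_self _))

lemma trace_mul_nonneg_of_posSemidef {m : Type*} [Fintype m] {A B : Matrix m m ℝ}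
    (hA : A.PosSemidef) (hB : B.PosSemidef) : 0 ≤ (A * B).trace := by
  obtain ⟨C, rfl⟩ := exists_eq_transpose_mul_self_of_posSemidef hA
  rw [Matrix.mul_assoc, trace_mul_comm]
  simpa only [conjTranspose_eq_transpose_of_trivial]
    using (hB.mul_mul_conjTranspose_same C).trace_nonneg

lemma froNorm_le_add_of_posSemidef {A B : Matrix (Fin n) (Fin n) ℝ} (hA : A.PosSemidef)
    (hB : B.PosSemidef) : froNorm A ≤ froNorm (A + B) := by
  refine (pow_le_pow_iff_left₀ (froNorm_nonneg _) (froNorm_nonneg _) two_ne_zero).1 ?_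
  have hAt : Aᵀ = A := by simpa using hA.isHermitian.eq
  have hBt : Bᵀ = B := by simpa using hB.isHermitian.eq
  have expand : froNorm (A + B) ^ 2 = froNorm A ^ 2 + 2 * (A * B).trace + froNorm B ^ 2 := by
    simp only [froNorm_sq_eq_trace, transpose_add, hAt, hBt, Matrix.add_mul, Matrix.mul_add,
      trace_add, trace_mul_comm B A]
    ring
  linarith [trace_mul_nonneg_of_posSemidef hA hB, sq_nonneg (froNorm B)]

lemma froNorm_mul_le_specNorm_mul (P A : Matrix (Fin n) (Fin n) ℝ) :
    froNorm (P * A) ≤ specNorm P * froNorm A := by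
  refine (pow_le_pow_iff_left₀ (froNorm_nonneg _)
    (mul_nonneg (specNorm_nonneg _) (froNorm_nonneg _)) two_ne_zero).1 ?_
  rw [mul_pow, froNorm_sq_eq_sum_col, froNorm_sq_eq_sum_col, Finset.mul_sum]
  refine Finset.sum_le_sum fun j _ => ?_
  rw [← mul_pow]
  exact pow_le_pow_left₀ (Real.sqrt_nonneg _) (euclNorm_mulVec_le P (A.col j)) 2

lemma froNorm_mul_le_mul_specNorm (A P : Matrix (Fin n) (Fin n) ℝ) :
    froNorm (A * P) ≤ froNorm A * specNorm P := by
  simpa only [← transpose_mul, froNorm_transpose, specNorm_transpose, mul_comm]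
    using froNorm_mul_le_specNorm_mul Pᵀ Aᵀ

/-- The common features of the spectral and Frobenius norms from which the approximation error is
controlled: monotonicity for the entrywise order and for the Loewner order, and boundedness under
congruences. -/
structure IsMonotoneSeminorm (N : Seminorm ℝ (Matrix (Fin n) (Fin n) ℝ)) : Prop where
  le_of_abs_le : ∀ {A B}, (∀ i j, |A i j| ≤ B i j) → N A ≤ N B
  le_add_of_posSemidef : ∀ {A B}, A.PosSemidef → B.PosSemidef → N A ≤ N (A + B)
  conj_le : ∀ P A, N (P * A * Pᵀ) ≤ specNorm P ^ 2 * N A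

lemma isMonotoneSeminorm_specSeminorm (n : ℕ) : IsMonotoneSeminorm (specSeminorm n) where
  le_of_abs_le := specNorm_le_of_abs_le
  le_add_of_posSemidef := specNorm_le_add_of_posSemidef
  conj_le P A := by
    calc specNorm (P * A * Pᵀ) ≤ specNorm (P * A) * specNorm Pᵀ := specNorm_mul_le _ _
      _ ≤ specNorm P * specNorm A * specNorm P := by
        rw [specNorm_transpose]
        exact mul_le_mul_of_nonneg_right (specNorm_mul_le _ _) (specNorm_nonneg _)
      _ = specNorm P ^ 2 * specNorm A := by ring

lemma isMonotoneSeminorm_froSeminorm (n : ℕ) : IsMonotoneSeminorm (froSeminorm n) where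
  le_of_abs_le := froNorm_le_of_abs_le
  le_add_of_posSemidef := froNorm_le_add_of_posSemidef
  conj_le P A := by
    calc froNorm (P * A * Pᵀ) ≤ froNorm (P * A) * specNorm Pᵀ := froNorm_mul_le_mul_specNorm _ _
      _ ≤ specNorm P * froNorm A * specNorm P := by
        rw [specNorm_transpose]
        exact mul_le_mul_of_nonneg_right (froNorm_mul_le_specNorm_mul _ _) (specNorm_nonneg _)
      _ = specNorm P ^ 2 * froNorm A := by ring

/-- The 0-1 matrix whose `i`-th row is the standard basis vector `e_{f i}`; congruence by it
replaces the indices `i, j` of a matrix by `f i, f j`. -/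
def selectionMatrix (f : Fin n → Fin n) : Matrix (Fin n) (Fin n) ℝ :=
  (1 : Matrix (Fin n) (Fin n) ℝ).submatrix f id

lemma selectionMatrix_mulVec (f : Fin n → Fin n) (x : Fin n → ℝ) :
    selectionMatrix f *ᵥ x = x ∘ f := by
  ext i
  simp [selectionMatrix, mulVec, dotProduct, one_apply]

lemma selectionMatrix_conj (f : Fin n → Fin n) (A : Matrix (Fin n) (Fin n) ℝ) :
    selectionMatrix f * A * (selectionMatrix f)ᵀ = A.submatrix f f := by
  ext i j
  simp [selectionMatrix, mul_apply, one_apply]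

lemma specNorm_selectionMatrix_sq_le {f : Fin n → Fin n} {c : ℕ}
    (hf : ∀ a, (Finset.univ.filter fun i => f i = a).card ≤ c) :
    specNorm (selectionMatrix f) ^ 2 ≤ c := by
  refine specNorm_sq_le_of_forall c.cast_nonneg fun x => ?_
  simp only [selectionMatrix_mulVec, Function.comp_apply]
  rw [← Finset.sum_fiberwise (s := Finset.univ) (g := f), Finset.mul_sum]
  refine Finset.sum_le_sum fun a _ => ?_
  calc ∑ i with f i = a, x (f i) ^ 2 = ∑ i with f i = a, x a ^ 2 :=
        Finset.sum_congr rfl fun i hi => by rw [(Finset.mem_filter.1 hi).2]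
    _ ≤ c * x a ^ 2 := by
        rw [Finset.sum_const, nsmul_eq_mul]
        exact mul_le_mul_of_nonneg_right (by exact_mod_cast hf a) (sq_nonneg _)

end MatrixNorms

section HankelMatrices

/-- The `n × n` Hankel matrix of the sequence `g`, with entries `g (i + j)`. -/
def hankelOf (n : ℕ) (g : ℕ → ℝ) : Matrix (Fin n) (Fin n) ℝ := of fun i j => g (i + j)

variable {n : ℕ}

lemma isHankel_hankelOf (g : ℕ → ℝ) : IsHankel (hankelOf n g) :=
  fun _ _ _ _ h => congrArg g h

lemma exists_eq_hankelOf {A : Matrix (Fin n) (Fin n) ℝ} (hA : IsHankel A) :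
    ∃ g, A = hankelOf n g := by
  let indexSum : Fin n × Fin n → ℕ := fun ij => ij.1 + ij.2
  have factors : Function.FactorsThrough (fun ij : Fin n × Fin n => A ij.1 ij.2) indexSum :=
    fun ij kl h => hA _ _ _ _ h
  exact ⟨Function.extend indexSum (fun ij => A ij.1 ij.2) 0,
    Matrix.ext fun i j => (factors.extend_apply 0 (i, j)).symm⟩

lemma IsHankel.add {A B : Matrix (Fin n) (Fin n) ℝ} (hA : IsHankel A) (hB : IsHankel B) :
    IsHankel (A + B) :=
  fun i j k l h => congrArg₂ (· + ·) (hA i j k l h) (hB i j k l h)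

lemma IsHankel.smul {A : Matrix (Fin n) (Fin n) ℝ} (hA : IsHankel A) (c : ℝ) :
    IsHankel (c • A) :=
  fun i j k l h => congrArg (c * ·) (hA i j k l h)

lemma IsHankel.submatrix_rev {A : Matrix (Fin n) (Fin n) ℝ} (hA : IsHankel A) :
    IsHankel (A.submatrix Fin.rev Fin.rev) :=
  fun i j k l h => hA _ _ _ _ (by simp only [Fin.val_rev]; omega)

lemma rank_add_le {m k K : Type*} [Finite m] [Fintype k] [Field K] (A B : Matrix m k K) :
    (A + B).rank ≤ A.rank + B.rank := by
  have range_le : LinearMap.range (A + B).mulVecLin ≤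
      LinearMap.range A.mulVecLin ⊔ LinearMap.range B.mulVecLin := by
    rintro _ ⟨x, rfl⟩
    rw [mulVecLin_add, LinearMap.add_apply]
    exact Submodule.add_mem_sup ⟨x, rfl⟩ ⟨x, rfl⟩
  exact (Submodule.finrank_mono range_le).trans (Submodule.finrank_add_le_finrank_add_finrank _ _)

lemma shift_mem_of_shift_one_mem {V : Submodule ℝ (ℕ → ℝ)}
    (hV : ∀ g ∈ V, (fun m => g (m + 1)) ∈ V) {g : ℕ → ℝ} (hg : g ∈ V) (j : ℕ) :
    (fun m => g (m + j)) ∈ V := by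
  induction j with
  | zero => exact hg
  | succ j ih => simpa only [add_assoc, add_comm 1 j] using hV _ ih

lemma rank_hankelOf_le_finrank {V : Submodule ℝ (ℕ → ℝ)} [FiniteDimensional ℝ V]
    (hV : ∀ g ∈ V, (fun m => g (m + 1)) ∈ V) {g : ℕ → ℝ} (hg : g ∈ V) :
    (hankelOf n g).rank ≤ Module.finrank ℝ V := by
  let restrict : (ℕ → ℝ) →ₗ[ℝ] Fin n → ℝ := LinearMap.funLeft ℝ ℝ Fin.val
  rw [rank_eq_finrank_span_cols]
  refine (Submodule.finrank_mono (Submodule.span_le.2 ?_)).trans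
    (Submodule.finrank_map_le restrict V)
  rintro _ ⟨j, rfl⟩
  exact ⟨_, shift_mem_of_shift_one_mem hV hg j, rfl⟩

end HankelMatrices

section ConfluentSequences

/-- The sequence `m ↦ C(m, l) z ^ (m - l)`, the `l`-th divided derivative of the powers
`m ↦ z ^ m`. The truncated subtraction is harmless, since `C(m, l) = 0` for `m < l`. -/
def binomialSeq {R : Type*} [CommSemiring R] (z : R) (l m : ℕ) : R := m.choose l * z ^ (m - l)

lemma binomialSeq_zero_succ {R : Type*} [CommSemiring R] (z : R) (m : ℕ) :
    binomialSeq z 0 (m + 1) = z * binomialSeq z 0 m := by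
  simp [binomialSeq, pow_succ']

lemma binomialSeq_succ_succ {R : Type*} [CommSemiring R] (z : R) (l m : ℕ) :
    binomialSeq z (l + 1) (m + 1) = z * binomialSeq z (l + 1) m + binomialSeq z l m := by
  simp only [binomialSeq, Nat.choose_succ_succ, Nat.add_sub_add_right]
  rcases lt_or_ge l m with hlm | hml
  · obtain ⟨d, rfl⟩ := Nat.exists_eq_add_of_lt hlm
    rw [show l + d + 1 - l = d + 1 by omega, show l + d + 1 - (l + 1) = d by omega]
    push_cast
    ring
  · simp [Nat.choose_eq_zero_of_lt (Nat.lt_succ_of_le hml)]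

/-- The span of the binomial sequences of orders `l < p` at the nodes `z q`. -/
def confluentSpace {ι : Type*} (z : ι → ℝ) (p : ℕ) : Submodule ℝ (ℕ → ℝ) :=
  Submodule.span ℝ (Set.range fun ql : ι × Fin p => binomialSeq (z ql.1) ql.2)

variable {ι : Type*} {z : ι → ℝ} {p : ℕ}

lemma binomialSeq_mem_confluentSpace (q : ι) {l : ℕ} (hl : l < p) :
    binomialSeq (z q) l ∈ confluentSpace z p :=
  Submodule.subset_span ⟨(q, ⟨l, hl⟩), rfl⟩

lemma shift_mem_confluentSpace {g : ℕ → ℝ} (hg : g ∈ confluentSpace z p) :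
    (fun m => g (m + 1)) ∈ confluentSpace z p := by
  let shift : (ℕ → ℝ) →ₗ[ℝ] ℕ → ℝ := LinearMap.funLeft ℝ ℝ (· + 1)
  suffices confluentSpace z p ≤ (confluentSpace z p).comap shift from this hg
  refine Submodule.span_le.2 ?_
  rintro _ ⟨⟨q, l, hl⟩, rfl⟩
  rcases l with _ | l
  · have shift_eq : shift (binomialSeq (z q) 0) = z q • binomialSeq (z q) 0 :=
      funext (binomialSeq_zero_succ (z q))
    change shift (binomialSeq (z q) 0) ∈ confluentSpace z p
    rw [shift_eq]
    exact Submodule.smul_mem _ _ (binomialSeq_mem_confluentSpace q hl)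
  · have shift_eq : shift (binomialSeq (z q) (l + 1)) =
        z q • binomialSeq (z q) (l + 1) + binomialSeq (z q) l :=
      funext (binomialSeq_succ_succ (z q) l)
    change shift (binomialSeq (z q) (l + 1)) ∈ confluentSpace z p
    rw [shift_eq]
    exact add_mem (Submodule.smul_mem _ _ (binomialSeq_mem_confluentSpace q hl))
      (binomialSeq_mem_confluentSpace q (Nat.lt_of_succ_lt hl))

lemma rank_hankelOf_le_of_mem_confluentSpace [Fintype ι] {n : ℕ} {g : ℕ → ℝ}
    (hg : g ∈ confluentSpace z p) : (hankelOf n g).rank ≤ Fintype.card ι * p := by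
  have : FiniteDimensional ℝ (confluentSpace z p) :=
    FiniteDimensional.span_of_finite ℝ (Set.finite_range _)
  refine (rank_hankelOf_le_finrank (fun _ => shift_mem_confluentSpace) hg).trans ?_
  calc Module.finrank ℝ (confluentSpace z p) ≤ Fintype.card (ι × Fin p) := finrank_range_le_card _
    _ = Fintype.card ι * p := by rw [Fintype.card_prod, Fintype.card_fin]

end ConfluentSequences

section TaylorTruncation

/-- The Taylor expansion of `t ↦ t ^ m` at `z`, truncated to its terms of order less than `p` and
evaluated at `x`. -/
def taylorPow {R : Type*} [CommRing R] (z x : R) (p m : ℕ) : R :=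
  ∑ l ∈ Finset.range p, (x - z) ^ l * binomialSeq z l m

lemma taylorPow_mem_confluentSpace {ι : Type*} (z : ι → ℝ) (q : ι) (x : ℝ) (p : ℕ) :
    taylorPow (z q) x p ∈ confluentSpace z p := by
  have eq_sum : taylorPow (z q) x p =
      ∑ l ∈ Finset.range p, (x - z q) ^ l • binomialSeq (z q) l := by
    ext m
    simp [taylorPow]
  rw [eq_sum]
  exact sum_mem fun l hl => Submodule.smul_mem _ _
    (binomialSeq_mem_confluentSpace q (Finset.mem_range.1 hl))

lemma pow_eq_taylorPow_add_sum {R : Type*} [CommRing R] (z x : R) (p m : ℕ) :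
    x ^ m = taylorPow z x p m +
      ∑ l ∈ Finset.range (m + 1), (x - z) ^ (p + l) * binomialSeq z (p + l) m := by
  rw [taylorPow, ← Finset.sum_range_add _ p (m + 1), add_comm p, Finset.sum_range_add]
  have higher_terms_eq_zero :
      ∑ l ∈ Finset.range p, (x - z) ^ (m + 1 + l) * binomialSeq z (m + 1 + l) m = 0 :=
    Finset.sum_eq_zero fun l _ => by
      simp [binomialSeq, Nat.choose_eq_zero_of_lt (show m < m + 1 + l by omega)]
  rw [higher_terms_eq_zero, add_zero, ← sub_add_cancel x z, add_pow]
  refine Finset.sum_congr rfl fun l _ => ?_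
  rw [sub_add_cancel, binomialSeq]
  ring

/-- Dividing `x - z` by `ρ` enlarges every Taylor term of order at least `p` by a factor of at
least `(1 / ρ) ^ p`. -/
lemma abs_pow_sub_taylorPow_le {z x ρ : ℝ} (hz : 0 ≤ z) (hzx : z ≤ x) (hρ : 0 < ρ) (hρ1 : ρ ≤ 1)
    (p m : ℕ) : |x ^ m - taylorPow z x p m| ≤ ρ ^ p * (z + (x - z) / ρ) ^ m := by
  have hd : 0 ≤ x - z := sub_nonneg.2 hzx
  have seq_nonneg (l : ℕ) : 0 ≤ binomialSeq z l m := by unfold binomialSeq; positivity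
  have taylor_nonneg : 0 ≤ taylorPow z (z + (x - z) / ρ) p m :=
    Finset.sum_nonneg fun l _ => mul_nonneg
      (by rw [add_sub_cancel_left]; positivity) (seq_nonneg l)
  rw [pow_eq_taylorPow_add_sum z x p m, add_sub_cancel_left,
    abs_of_nonneg (Finset.sum_nonneg fun l _ => mul_nonneg (pow_nonneg hd _) (seq_nonneg _)),
    pow_eq_taylorPow_add_sum z (z + (x - z) / ρ) p m, mul_add, Finset.mul_sum]
  refine le_add_of_nonneg_of_le (mul_nonneg (by positivity) taylor_nonneg)
    (Finset.sum_le_sum fun l _ => ?_)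
  have coeff_le : (x - z) ^ (p + l) ≤ ρ ^ p * ((x - z) / ρ) ^ (p + l) := by
    rw [div_pow, pow_add ρ, mul_div_assoc', mul_div_mul_left _ _ (by positivity)]
    exact le_div_self (by positivity) (by positivity) (pow_le_one₀ hρ.le hρ1)
  rw [add_sub_cancel_left, ← mul_assoc]
  exact mul_le_mul_of_nonneg_right coeff_le (seq_nonneg _)

end TaylorTruncation

section DyadicNodes

lemma exists_dyadic_node (K : ℕ) {x : ℝ} (hx0 : 0 ≤ x) :
    ∃ q ≤ K, 1 - (1 / 2 : ℝ) ^ q ≤ x ∧ (q = K ∨ 2 * x - 1 ≤ 1 - (1 / 2 : ℝ) ^ q) := by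
  induction K with
  | zero => exact ⟨0, le_rfl, by simpa using hx0, Or.inl rfl⟩
  | succ K ih =>
    obtain ⟨q, hqK, hqx, rfl | hxq⟩ := ih
    · rcases le_total (1 - (1 / 2 : ℝ) ^ (q + 1)) x with h | h
      · exact ⟨q + 1, le_rfl, h, Or.inl rfl⟩
      · exact ⟨q, hqK.trans q.le_succ, hqx, Or.inr (by rw [pow_succ] at h; linarith)⟩
    · exact ⟨q, hqK.trans K.le_succ, hqx, Or.inr hxq⟩

lemma dilated_pow_four_le {z x : ℝ} (hz : 0 ≤ z) (hzx : z ≤ x) (hxz : 2 * x - 1 ≤ z) :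
    (z + (x - z) / (2 / 3)) ^ 4 ≤ x := by
  have dilated_nonneg : 0 ≤ z + (x - z) / (2 / 3) := by linarith
  rcases le_total x (1 / 2) with hx | hx
  · calc (z + (x - z) / (2 / 3)) ^ 4 ≤ (3 / 2 * x) ^ 4 :=
        pow_le_pow_left₀ dilated_nonneg (by linarith) 4
      _ = 81 / 16 * x ^ 3 * x := by ring
      _ ≤ 81 / 16 * (1 / 2) ^ 3 * x := by gcongr <;> linarith
      _ ≤ x := by linarith
  · have sq_le : ((x + 1) / 2) ^ 2 ≤ (1 + 7 * x) / 8 := by nlinarith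
    calc (z + (x - z) / (2 / 3)) ^ 4 ≤ ((x + 1) / 2) ^ 4 :=
        pow_le_pow_left₀ dilated_nonneg (by linarith) 4
      _ = (((x + 1) / 2) ^ 2) ^ 2 := by ring
      _ ≤ ((1 + 7 * x) / 8) ^ 2 := by gcongr
      _ ≤ x := by nlinarith

lemma dilated_pow_le_of_two_mul_sub_one_le {z x : ℝ} (hz : 0 ≤ z) (hzx : z ≤ x)
    (hxz : 2 * x - 1 ≤ z) {s m : ℕ} (hsm : 4 * s ≤ m) :
    (z + (x - z) / (2 / 3)) ^ m ≤ x ^ s := by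
  have dilated_nonneg : 0 ≤ z + (x - z) / (2 / 3) := by linarith
  have pow_four_le := dilated_pow_four_le hz hzx hxz
  have dilated_le_one : z + (x - z) / (2 / 3) ≤ 1 :=
    (pow_le_one_iff_of_nonneg dilated_nonneg four_ne_zero).1 (by linarith)
  calc (z + (x - z) / (2 / 3)) ^ m ≤ (z + (x - z) / (2 / 3)) ^ (4 * s) :=
        pow_le_pow_of_le_one dilated_nonneg dilated_le_one hsm
    _ = ((z + (x - z) / (2 / 3)) ^ 4) ^ s := pow_mul _ _ _
    _ ≤ x ^ s := pow_le_pow_left₀ (by positivity) pow_four_le s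

lemma dilated_pow_le_three_mul_pow {z x : ℝ} (hz : 0 ≤ z) (hzx : z ≤ x) (hx1 : x ≤ 1) {m : ℕ}
    (hm : (1 - z) * m ≤ 2) : (z + (x - z) / (2 / 3)) ^ m ≤ 3 * x ^ m := by
  have dilated_le : z + (x - z) / (2 / 3) ≤ (1 + (1 - z) / 2) * x := by nlinarith
  have factor_le : (1 + (1 - z) / 2) ^ m ≤ 3 := by
    calc (1 + (1 - z) / 2) ^ m ≤ Real.exp ((1 - z) / 2) ^ m := by
          gcongr
          · linarith
          · linarith [Real.add_one_le_exp ((1 - z) / 2)]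
      _ = Real.exp (m * ((1 - z) / 2)) := (Real.exp_nat_mul _ _).symm
      _ ≤ Real.exp 1 := Real.exp_le_exp.2 (by linarith)
      _ ≤ 3 := Real.exp_one_lt_three.le
  calc (z + (x - z) / (2 / 3)) ^ m ≤ ((1 + (1 - z) / 2) * x) ^ m :=
        pow_le_pow_left₀ (by linarith) dilated_le m
    _ = (1 + (1 - z) / 2) ^ m * x ^ m := mul_pow _ _ _
    _ ≤ 3 * x ^ m := mul_le_mul_of_nonneg_right factor_le (pow_nonneg (hz.trans hzx) m)

/-- The nodes `0, 1/2, 3/4, …, 1 - 2 ^ (-K)`, accumulating at `1`, where the powers `x ^ m` vary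
fastest. -/
noncomputable def dyadicNode (K : ℕ) (q : Fin (K + 1)) : ℝ := 1 - (1 / 2) ^ (q : ℕ)

lemma exists_dyadicNode_dilated_pow_le {K n : ℕ} (hn : n ≤ 2 ^ K) {x : ℝ} (hx0 : 0 ≤ x)
    (hx1 : x ≤ 1) : ∃ q : Fin (K + 1), 0 ≤ dyadicNode K q ∧ dyadicNode K q ≤ x ∧
      ∀ s m : ℕ, 4 * s ≤ m → m ≤ 2 * n →
        (dyadicNode K q + (x - dyadicNode K q) / (2 / 3)) ^ m ≤ 3 * x ^ s := by
  obtain ⟨q, hqK, hqx, hq⟩ := exists_dyadic_node K hx0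
  have node_nonneg : (0 : ℝ) ≤ 1 - (1 / 2) ^ q :=
    sub_nonneg.2 (pow_le_one₀ (by norm_num) (by norm_num))
  refine ⟨⟨q, Nat.lt_succ_of_le hqK⟩, node_nonneg, hqx, fun s m hsm hmn => ?_⟩
  rw [dyadicNode]
  rcases hq with rfl | hxq
  · have gap_mul_le : (1 - (1 - (1 / 2 : ℝ) ^ q)) * m ≤ 2 := by
      have hm : (m : ℝ) ≤ 2 * 2 ^ q := by exact_mod_cast hmn.trans (Nat.mul_le_mul_left 2 hn)
      rw [sub_sub_cancel, _root_.one_div_pow, one_div_mul_eq_div, div_le_iff₀ (by positivity)]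
      exact hm
    refine (dilated_pow_le_three_mul_pow node_nonneg hqx hx1 gap_mul_le).trans ?_
    gcongr 3 * ?_
    exact pow_le_pow_of_le_one hx0 hx1 (by omega)
  · refine (dilated_pow_le_of_two_mul_sub_one_le node_nonneg hqx hxq hsm).trans ?_
    linarith [pow_nonneg hx0 s]

lemma exists_mem_confluentSpace_abs_sub_le {K n : ℕ} (hn : n ≤ 2 ^ K) (p : ℕ) {x : ℝ}
    (hx0 : 0 ≤ x) (hx1 : x ≤ 1) :
    ∃ g ∈ confluentSpace (dyadicNode K) p, ∀ i j : Fin n,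
      |x ^ (i + j : ℕ) - g (i + j)| ≤ 3 * (2 / 3) ^ p * x ^ (i / 4 + j / 4 : ℕ) := by
  obtain ⟨q, node_nonneg, node_le, dilated_pow_le⟩ := exists_dyadicNode_dilated_pow_le hn hx0 hx1
  refine ⟨taylorPow (dyadicNode K q) x p, taylorPow_mem_confluentSpace _ q x p, fun i j => ?_⟩
  calc |x ^ (i + j : ℕ) - taylorPow (dyadicNode K q) x p (i + j)|
      ≤ (2 / 3) ^ p * (dyadicNode K q + (x - dyadicNode K q) / (2 / 3)) ^ (i + j : ℕ) :=
        abs_pow_sub_taylorPow_le node_nonneg node_le (by norm_num) (by norm_num) p _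
    _ ≤ (2 / 3) ^ p * (3 * x ^ (i / 4 + j / 4 : ℕ)) := by
        gcongr
        exact dilated_pow_le _ _ (by omega) (by omega)
    _ = 3 * (2 / 3) ^ p * x ^ (i / 4 + j / 4 : ℕ) := by ring

end DyadicNodes

section MomentMatrices

variable {ι : Type*}

/-- The Hankel matrix of the moments of the discrete measure `∑ k ∈ S, w k • δ_{x k}`. -/
def momentMatrix (n : ℕ) (S : Finset ι) (w x : ι → ℝ) : Matrix (Fin n) (Fin n) ℝ :=
  hankelOf n fun m => ∑ k ∈ S, w k * x k ^ m

variable {n : ℕ} {S : Finset ι} {w x : ι → ℝ}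

lemma momentMatrix_apply (i j : Fin n) :
    momentMatrix n S w x i j = ∑ k ∈ S, w k * x k ^ (i + j : ℕ) :=
  rfl

lemma momentMatrix_eq_sum_vecMulVec : momentMatrix n S w x =
    ∑ k ∈ S, w k • vecMulVec (fun i : Fin n => x k ^ (i : ℕ)) fun i : Fin n => x k ^ (i : ℕ) := by
  ext i j
  simp [momentMatrix_apply, Matrix.sum_apply, vecMulVec_apply, pow_add]

lemma posSemidef_momentMatrix (hw : ∀ k ∈ S, 0 ≤ w k) : (momentMatrix n S w x).PosSemidef := by
  rw [momentMatrix_eq_sum_vecMulVec]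
  refine posSemidef_sum S fun k hk => PosSemidef.smul ?_ (hw k hk)
  simpa only [star_trivial] using posSemidef_vecMulVec_self_star fun i : Fin n => x k ^ (i : ℕ)

lemma momentMatrix_filter_add_filter_not (P : ι → Prop) [DecidablePred P] :
    momentMatrix n (S.filter P) w x + momentMatrix n (S.filter fun k => ¬P k) w x =
      momentMatrix n S w x := by
  ext i j
  exact Finset.sum_filter_add_sum_filter_not S P _

lemma momentMatrix_submatrix_rev (hx : ∀ k ∈ S, x k ≠ 0) :
    (momentMatrix n S w x).submatrix Fin.rev Fin.rev =
      momentMatrix n S (fun k => w k * x k ^ (2 * (n - 1))) fun k => (x k)⁻¹ := by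
  ext i j
  simp only [submatrix_apply, momentMatrix_apply, mul_assoc]
  refine Finset.sum_congr rfl fun k hk => congrArg (w k * ·) ?_
  rw [inv_pow, eq_mul_inv_iff_mul_eq₀ (pow_ne_zero _ (hx k hk)), ← pow_add]
  congr 1
  simp only [Fin.val_rev]
  omega

lemma diagonal_conj_momentMatrix :
    (diagonal fun i : Fin n => (-1 : ℝ) ^ (i : ℕ)) * momentMatrix n S w x *
      (diagonal fun i : Fin n => (-1 : ℝ) ^ (i : ℕ))ᵀ = momentMatrix n S w fun k => -x k := by
  ext i j
  rw [diagonal_transpose, mul_diagonal, diagonal_mul]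
  simp only [momentMatrix_apply, Finset.mul_sum, Finset.sum_mul]
  refine Finset.sum_congr rfl fun k _ => ?_
  rw [neg_pow (x k), pow_add (-1 : ℝ)]
  ring

end MomentMatrices

section HankelApproximation

variable {n : ℕ}

/-- `G` has a Hankel approximation of rank at most `r` whose relative error is at most `η`,
simultaneously in all monotone seminorms. -/
def HasHankelApprox (r : ℕ) (η : ℝ) (G : Matrix (Fin n) (Fin n) ℝ) : Prop :=
  ∃ M, IsHankel M ∧ M.rank ≤ r ∧ ∀ N, IsMonotoneSeminorm N → N (G - M) ≤ η * N G

variable {r s : ℕ} {η : ℝ} {G F : Matrix (Fin n) (Fin n) ℝ}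

lemma HasHankelApprox.add (hη : 0 ≤ η) (hG : G.PosSemidef) (hF : F.PosSemidef)
    (hrG : HasHankelApprox r η G) (hsF : HasHankelApprox s η F) :
    HasHankelApprox (r + s) (2 * η) (G + F) := by
  obtain ⟨A, hankel_A, rank_A, error_A⟩ := hrG
  obtain ⟨B, hankel_B, rank_B, error_B⟩ := hsF
  refine ⟨A + B, hankel_A.add hankel_B, (rank_add_le A B).trans (add_le_add rank_A rank_B),
    fun N hN => ?_⟩
  have hGF : N G ≤ N (G + F) := hN.le_add_of_posSemidef hG hF
  have hFG : N F ≤ N (G + F) := add_comm F G ▸ hN.le_add_of_posSemidef hF hG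
  calc N (G + F - (A + B)) = N (G - A + (F - B)) := by rw [add_sub_add_comm]
    _ ≤ N (G - A) + N (F - B) := map_add_le_add N _ _
    _ ≤ η * N G + η * N F := add_le_add (error_A N hN) (error_B N hN)
    _ ≤ η * N (G + F) + η * N (G + F) := by gcongr
    _ = 2 * η * N (G + F) := by ring

lemma IsMonotoneSeminorm.conj_le_self {N : Seminorm ℝ (Matrix (Fin n) (Fin n) ℝ)}
    (hN : IsMonotoneSeminorm N) {P : Matrix (Fin n) (Fin n) ℝ} (hP : specNorm P ≤ 1)
    (A : Matrix (Fin n) (Fin n) ℝ) : N (P * A * Pᵀ) ≤ N A :=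
  (hN.conj_le P A).trans <| mul_le_of_le_one_left (apply_nonneg N A)
    (pow_le_one₀ (specNorm_nonneg P) hP)

lemma HasHankelApprox.of_conj (hη : 0 ≤ η) {P : Matrix (Fin n) (Fin n) ℝ}
    (hP : specNorm P ≤ 1) (hPP : P * P = 1)
    (hankel_conj : ∀ M, IsHankel M → IsHankel (P * M * Pᵀ))
    (hG : HasHankelApprox r η (P * G * Pᵀ)) : HasHankelApprox r η G := by
  obtain ⟨M, hankel_M, rank_M, error_M⟩ := hG
  refine ⟨P * M * Pᵀ, hankel_conj M hankel_M,
    ((rank_mul_le_left _ _).trans (rank_mul_le_right _ _)).trans rank_M, fun N hN => ?_⟩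
  have conj_conj : P * (P * G * Pᵀ) * Pᵀ = G := by
    rw [← Matrix.mul_assoc, ← Matrix.mul_assoc, hPP, Matrix.one_mul, Matrix.mul_assoc,
      ← transpose_mul, hPP, transpose_one, Matrix.mul_one]
  calc N (G - P * M * Pᵀ) = N (P * (P * G * Pᵀ - M) * Pᵀ) := by
        rw [Matrix.mul_sub, Matrix.sub_mul, conj_conj]
    _ ≤ N (P * G * Pᵀ - M) := hN.conj_le_self hP _
    _ ≤ η * N (P * G * Pᵀ) := error_M N hN
    _ ≤ η * N G := mul_le_mul_of_nonneg_left (hN.conj_le_self hP G) hη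

lemma HasHankelApprox.of_submatrix_rev (hη : 0 ≤ η)
    (hG : HasHankelApprox r η (G.submatrix Fin.rev Fin.rev)) : HasHankelApprox r η G := by
  have specNorm_le : specNorm (selectionMatrix (Fin.rev (n := n))) ≤ 1 := by
    refine (sq_le_one_iff₀ (specNorm_nonneg _)).1 ?_
    refine (specNorm_selectionMatrix_sq_le (c := 1) fun a => Finset.card_le_one.2 ?_).trans_eq
      Nat.cast_one
    intro i hi j hj
    exact Fin.rev_injective ((Finset.mem_filter.1 hi).2.trans (Finset.mem_filter.1 hj).2.symm)
  refine .of_conj hη specNorm_le ?_ (fun M hM => ?_) (by rwa [selectionMatrix_conj])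
  · ext i j
    simp [selectionMatrix, mul_apply, one_apply, Fin.rev_eq_iff]
  · rw [selectionMatrix_conj]
    exact hM.submatrix_rev

lemma HasHankelApprox.of_sign_conj (hη : 0 ≤ η)
    (hG : HasHankelApprox r η ((diagonal fun i : Fin n => (-1 : ℝ) ^ (i : ℕ)) * G *
      (diagonal fun i : Fin n => (-1 : ℝ) ^ (i : ℕ))ᵀ)) : HasHankelApprox r η G := by
  refine .of_conj hη (specNorm_diagonal_le zero_le_one fun i => by simp) ?_ (fun M hM => ?_) hG
  · rw [diagonal_mul_diagonal, ← diagonal_one]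
    simp [← mul_pow]
  · intro i j k l h
    simp only [diagonal_transpose, mul_diagonal, diagonal_mul]
    rw [hM i j k l h, mul_right_comm, ← pow_add, h, pow_add, mul_right_comm]

end HankelApproximation

section MomentMatrixApproximation

variable {ι : Type*} {n K : ℕ} {S : Finset ι} {w x : ι → ℝ}

lemma exists_hankelOf_abs_momentMatrix_sub_le (hn : n ≤ 2 ^ K) (p : ℕ)
    (hw : ∀ k ∈ S, 0 ≤ w k) (hx0 : ∀ k ∈ S, 0 ≤ x k) (hx1 : ∀ k ∈ S, x k ≤ 1) :
    ∃ g ∈ confluentSpace (dyadicNode K) p, ∀ i j : Fin n,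
      |(momentMatrix n S w x - hankelOf n g) i j| ≤
        3 * (2 / 3) ^ p * ∑ k ∈ S, w k * x k ^ (i / 4 + j / 4 : ℕ) := by
  choose! g g_mem error_le using fun k (hk : k ∈ S) =>
    exists_mem_confluentSpace_abs_sub_le hn p (hx0 k hk) (hx1 k hk)
  refine ⟨∑ k ∈ S, w k • g k, sum_mem fun k hk => Submodule.smul_mem _ _ (g_mem k hk),
    fun i j => ?_⟩
  have entry_eq : (momentMatrix n S w x - hankelOf n (∑ k ∈ S, w k • g k)) i j =
      ∑ k ∈ S, w k * (x k ^ (i + j : ℕ) - g k (i + j)) := by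
    simp [momentMatrix_apply, hankelOf, mul_sub]
  rw [entry_eq, Finset.mul_sum]
  refine (Finset.abs_sum_le_sum_abs _ _).trans (Finset.sum_le_sum fun k hk => ?_)
  rw [abs_mul, abs_of_nonneg (hw k hk), mul_left_comm]
  exact mul_le_mul_of_nonneg_left (error_le k hk i j) (hw k hk)

/-- The index map `i ↦ ⌊i / 4⌋`, along which the entries of a moment matrix dominate the error of
the truncated Taylor expansions. -/
def quarterIndex (i : Fin n) : Fin n := ⟨i / 4, (Nat.div_le_self _ _).trans_lt i.2⟩

lemma card_quarterIndex_fiber_le (a : Fin n) :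
    (Finset.univ.filter fun i => quarterIndex i = a).card ≤ 4 := by
  have maps_to (i) (hi : i ∈ Finset.univ.filter fun i => quarterIndex i = a) :
      (i : ℕ) ∈ Finset.Ico (4 * a : ℕ) (4 * a + 4) := by
    have : (i : ℕ) / 4 = a := congrArg Fin.val (Finset.mem_filter.1 hi).2
    rw [Finset.mem_Ico]
    omega
  refine (Finset.card_le_card_of_injOn Fin.val maps_to Fin.val_injective.injOn).trans ?_
  simp

lemma IsMonotoneSeminorm.submatrix_quarterIndex_le {N : Seminorm ℝ (Matrix (Fin n) (Fin n) ℝ)}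
    (hN : IsMonotoneSeminorm N) (A : Matrix (Fin n) (Fin n) ℝ) :
    N (A.submatrix quarterIndex quarterIndex) ≤ 4 * N A := by
  rw [← selectionMatrix_conj]
  exact (hN.conj_le _ A).trans <| mul_le_mul_of_nonneg_right
    (specNorm_selectionMatrix_sq_le card_quarterIndex_fiber_le) (apply_nonneg N A)

lemma hasHankelApprox_momentMatrix_of_le_one (hn : n ≤ 2 ^ K) (p : ℕ)
    (hw : ∀ k ∈ S, 0 ≤ w k) (hx0 : ∀ k ∈ S, 0 ≤ x k) (hx1 : ∀ k ∈ S, x k ≤ 1) :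
    HasHankelApprox ((K + 1) * p) (12 * (2 / 3) ^ p) (momentMatrix n S w x) := by
  obtain ⟨g, g_mem, error_le⟩ := exists_hankelOf_abs_momentMatrix_sub_le hn p hw hx0 hx1
  refine ⟨hankelOf n g, isHankel_hankelOf g, ?_, fun N hN => ?_⟩
  · simpa only [Fintype.card_fin] using rank_hankelOf_le_of_mem_confluentSpace g_mem
  · set G := momentMatrix n S w x
    have c_nonneg : (0 : ℝ) ≤ 3 * (2 / 3) ^ p := by positivity
    calc N (G - hankelOf n g)
        ≤ N ((3 * (2 / 3) ^ p : ℝ) • G.submatrix quarterIndex quarterIndex) :=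
          hN.le_of_abs_le error_le
      _ = 3 * (2 / 3) ^ p * N (G.submatrix quarterIndex quarterIndex) := by
          rw [map_smul_eq_mul, Real.norm_of_nonneg c_nonneg]
      _ ≤ 3 * (2 / 3) ^ p * (4 * N G) :=
          mul_le_mul_of_nonneg_left (hN.submatrix_quarterIndex_le G) c_nonneg
      _ = 12 * (2 / 3) ^ p * N G := by ring

lemma hasHankelApprox_momentMatrix_of_one_le (hn : n ≤ 2 ^ K) (p : ℕ)
    (hw : ∀ k ∈ S, 0 ≤ w k) (hx1 : ∀ k ∈ S, 1 ≤ x k) :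
    HasHankelApprox ((K + 1) * p) (12 * (2 / 3) ^ p) (momentMatrix n S w x) := by
  have hx (k) (hk : k ∈ S) : 0 < x k := one_pos.trans_le (hx1 k hk)
  refine .of_submatrix_rev (by positivity) ?_
  rw [momentMatrix_submatrix_rev fun k hk => (hx k hk).ne']
  exact hasHankelApprox_momentMatrix_of_le_one hn p
    (fun k hk => mul_nonneg (hw k hk) (pow_nonneg (hx k hk).le _))
    (fun k hk => (inv_pos.2 (hx k hk)).le) fun k hk => inv_le_one_of_one_le₀ (hx1 k hk)

lemma hasHankelApprox_momentMatrix_of_nonneg (hn : n ≤ 2 ^ K) (p : ℕ)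
    (hw : ∀ k ∈ S, 0 ≤ w k) (hx0 : ∀ k ∈ S, 0 ≤ x k) :
    HasHankelApprox (2 * ((K + 1) * p)) (24 * (2 / 3) ^ p) (momentMatrix n S w x) := by
  have hw' {P : ι → Prop} [DecidablePred P] (k) (hk : k ∈ S.filter P) : 0 ≤ w k :=
    hw k (Finset.mem_filter.1 hk).1
  rw [← momentMatrix_filter_add_filter_not fun k => x k ≤ 1, two_mul,
    show (24 * (2 / 3) ^ p : ℝ) = 2 * (12 * (2 / 3) ^ p) by ring]
  refine .add (by positivity) (posSemidef_momentMatrix hw') (posSemidef_momentMatrix hw')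
    (hasHankelApprox_momentMatrix_of_le_one hn p hw' ?_ ?_)
    (hasHankelApprox_momentMatrix_of_one_le hn p hw' ?_)
  · exact fun k hk => hx0 k (Finset.mem_filter.1 hk).1
  · exact fun k hk => (Finset.mem_filter.1 hk).2
  · exact fun k hk => (not_le.1 (Finset.mem_filter.1 hk).2).le

lemma hasHankelApprox_momentMatrix_of_nonpos (hn : n ≤ 2 ^ K) (p : ℕ)
    (hw : ∀ k ∈ S, 0 ≤ w k) (hx0 : ∀ k ∈ S, x k ≤ 0) :
    HasHankelApprox (2 * ((K + 1) * p)) (24 * (2 / 3) ^ p) (momentMatrix n S w x) := by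
  refine .of_sign_conj (by positivity) ?_
  rw [diagonal_conj_momentMatrix]
  exact hasHankelApprox_momentMatrix_of_nonneg hn p hw fun k hk => neg_nonneg.2 (hx0 k hk)

lemma hasHankelApprox_momentMatrix (hn : n ≤ 2 ^ K) (p : ℕ) (hw : ∀ k ∈ S, 0 ≤ w k) :
    HasHankelApprox (4 * ((K + 1) * p)) (48 * (2 / 3) ^ p) (momentMatrix n S w x) := by
  have hw' {P : ι → Prop} [DecidablePred P] (k) (hk : k ∈ S.filter P) : 0 ≤ w k :=
    hw k (Finset.mem_filter.1 hk).1
  rw [← momentMatrix_filter_add_filter_not fun k => 0 ≤ x k,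
    show 4 * ((K + 1) * p) = 2 * ((K + 1) * p) + 2 * ((K + 1) * p) by ring,
    show (48 * (2 / 3) ^ p : ℝ) = 2 * (24 * (2 / 3) ^ p) by ring]
  refine .add (by positivity) (posSemidef_momentMatrix hw') (posSemidef_momentMatrix hw')
    (hasHankelApprox_momentMatrix_of_nonneg hn p hw' ?_)
    (hasHankelApprox_momentMatrix_of_nonpos hn p hw' ?_)
  · exact fun k hk => (Finset.mem_filter.1 hk).2
  · exact fun k hk => (not_le.1 (Finset.mem_filter.1 hk).2).le

end MomentMatrixApproximation

section MomentRepresentation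

variable {m : Type*} [Fintype m] [DecidableEq m]

lemma exists_orthogonal_diagonalization {A : Matrix m m ℝ} (hA : A.IsSymm) :
    ∃ (Q : Matrix m m ℝ) (d : m → ℝ), Qᵀ * Q = 1 ∧ A = Qᵀ * diagonal d * Q := by
  have hermitian : A.IsHermitian := by
    rwa [IsHermitian, conjTranspose_eq_transpose_of_trivial]
  have spectral := hermitian.spectral_theorem
  have unitary := Unitary.coe_mul_star_self hermitian.eigenvectorUnitary
  simp only [Unitary.conjStarAlgAut_apply, star_eq_conjTranspose,
    conjTranspose_eq_transpose_of_trivial] at spectral unitary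
  exact ⟨(hermitian.eigenvectorUnitary : Matrix m m ℝ)ᵀ, hermitian.eigenvalues,
    by rwa [transpose_transpose], by rwa [transpose_transpose]⟩

lemma exists_simultaneous_diagonalization {A B : Matrix m m ℝ} (hA : A.PosDef)
    (hB : B.IsSymm) : ∃ (Y : Matrix m m ℝ) (d : m → ℝ),
      IsUnit Y ∧ A = Yᵀ * Y ∧ B = Yᵀ * diagonal d * Y := by
  obtain ⟨C, rfl⟩ := exists_eq_transpose_mul_self_of_posSemidef hA.posSemidef
  have hC : IsUnit C := isUnit_of_mul_isUnit_right hA.isUnit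
  have hCdet : IsUnit C.det := (isUnit_iff_isUnit_det C).1 hC
  have symm : (C⁻¹ᵀ * B * C⁻¹).IsSymm := by
    rw [IsSymm, transpose_mul, transpose_mul, transpose_transpose, hB.eq, Matrix.mul_assoc]
  obtain ⟨Q, d, hQ, conj_eq⟩ := exists_orthogonal_diagonalization symm
  refine ⟨Q * C, d, (IsUnit.of_mul_eq_one_right _ hQ).mul hC, ?_, ?_⟩
  · rw [transpose_mul, Matrix.mul_assoc, ← Matrix.mul_assoc Qᵀ, hQ, Matrix.one_mul]
  · calc B = Cᵀ * (C⁻¹ᵀ * B * C⁻¹) * C := by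
          rw [← Matrix.mul_assoc, ← Matrix.mul_assoc, ← transpose_mul, nonsing_inv_mul _ hCdet,
            transpose_one, Matrix.one_mul, Matrix.mul_assoc, nonsing_inv_mul _ hCdet,
            Matrix.mul_one]
      _ = (Q * C)ᵀ * diagonal d * (Q * C) := by
          rw [conj_eq, transpose_mul]
          simp only [Matrix.mul_assoc]

/-- Diagonalizing `H` simultaneously with its shift as `Yᵀ * Y` and `Yᵀ * diagonal x * Y` forces
the rows of `Y` to be geometric progressions, the `k`-th one with ratio `x k`. -/
lemma exists_eq_momentMatrix_of_posDef {n : ℕ} {H : Matrix (Fin n) (Fin n) ℝ}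
    (hH : H.PosDef) (hankel_H : IsHankel H) :
    ∃ w x : Fin n → ℝ, (∀ k, 0 ≤ w k) ∧ H = momentMatrix n Finset.univ w x := by
  obtain _ | n := n
  · exact ⟨0, 0, fun _ => le_rfl, Subsingleton.elim _ _⟩
  obtain ⟨h, rfl⟩ := exists_eq_hankelOf hankel_H
  have symm_shift : (hankelOf (n + 1) fun m => h (m + 1)).IsSymm :=
    Matrix.ext fun i j => congrArg (fun m => h (m + 1)) (add_comm _ _)
  obtain ⟨Y, x, hY, gram, gram_shift⟩ := exists_simultaneous_diagonalization hH symm_shift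
  have col_succ (i : Fin n) : Y.col i.succ = (diagonal x * Y).col i.castSucc := by
    refine mulVec_injective_of_isUnit ((isUnit_transpose Y).2 hY) ?_
    calc Yᵀ *ᵥ Y.col i.succ = (Yᵀ * Y).col i.succ := rfl
      _ = (Yᵀ * diagonal x * Y).col i.castSucc := by
        rw [← gram, ← gram_shift]
        ext a
        exact congrArg h (add_assoc _ _ _).symm
      _ = Yᵀ *ᵥ (diagonal x * Y).col i.castSucc := by
        rw [Matrix.mul_assoc]
        rfl
  have geometric (k i : Fin (n + 1)) : Y k i = x k ^ (i : ℕ) * Y k 0 := by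
    induction i using Fin.induction with
    | zero => simp
    | succ i ih =>
      have := congrFun (col_succ i) k
      simp only [col_apply, diagonal_mul] at this
      rw [this, ih, Fin.val_succ, pow_succ', mul_assoc, Fin.val_castSucc]
  refine ⟨fun k => Y k 0 ^ 2, x, fun k => sq_nonneg _, ?_⟩
  rw [gram]
  ext i j
  rw [mul_apply, momentMatrix_apply]
  refine Finset.sum_congr rfl fun k _ => ?_
  rw [transpose_apply, geometric k i, geometric k j, pow_add]
  ring

end MomentRepresentation

section Perturbation

variable {n : ℕ}

lemma exists_posDef_isHankel (n : ℕ) :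
    ∃ P : Matrix (Fin n) (Fin n) ℝ, P.PosDef ∧ IsHankel P := by
  let V := vandermonde fun i : Fin n => (i : ℝ)
  have hV : IsUnit V := by
    rw [isUnit_iff_isUnit_det, isUnit_iff_ne_zero, det_vandermonde_ne_zero_iff]
    exact Nat.cast_injective.comp Fin.val_injective
  refine ⟨Vᴴ * V, .conjTranspose_mul_self V (mulVec_injective_of_isUnit hV), fun i j k l h => ?_⟩
  simp only [V, mul_apply, conjTranspose_apply, vandermonde_apply, star_trivial, ← pow_add, h]

open Filter Topology in
lemma eventually_forall_le_of_perturbation_le {E : Type*} [AddCommGroup E] [Module ℝ E]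
    (N : Seminorm ℝ E) {H : E} (hH : 0 < N H) (P : E) {η κ : ℝ} (hη : 0 ≤ η) (hηκ : η < κ) :
    ∀ᶠ δ : ℝ in 𝓝[>] 0,
      ∀ M, N (H + δ • P - M) ≤ η * N (H + δ • P) → N (H - M) ≤ κ * N H := by
  have small : ∀ᶠ δ : ℝ in 𝓝[>] 0, (η + 1) * (δ * N P) < (κ - η) * N H := by
    have tendsto : Tendsto (fun δ : ℝ => (η + 1) * (δ * N P)) (𝓝[>] 0) (𝓝 0) := by
      refine Tendsto.mono_left ?_ nhdsWithin_le_nhds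
      exact Continuous.tendsto' (by fun_prop) _ _ (by simp)
    exact tendsto.eventually_lt_const (mul_pos (sub_pos.2 hηκ) hH)
  filter_upwards [small, self_mem_nhdsWithin] with δ hδ hδ_pos M hM
  have perturbation_eq : N (δ • P) = δ * N P := by
    rw [map_smul_eq_mul, Real.norm_of_nonneg (le_of_lt hδ_pos)]
  have perturbed_le : N (H + δ • P) ≤ N H + δ * N P :=
    perturbation_eq ▸ map_add_le_add N H (δ • P)
  calc N (H - M) = N (H + δ • P - M - δ • P) := by rw [add_sub_right_comm, add_sub_cancel_right]
    _ ≤ N (H + δ • P - M) + δ * N P := perturbation_eq ▸ map_sub_le_add N _ _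
    _ ≤ η * (N H + δ * N P) + δ * N P := by
      gcongr
      exact hM.trans (mul_le_mul_of_nonneg_left perturbed_le hη)
    _ = η * N H + (η + 1) * (δ * N P) := by ring
    _ ≤ κ * N H := by linarith

lemma hasHankelApprox_of_posDef {K : ℕ} (hn : n ≤ 2 ^ K) (p : ℕ)
    {H : Matrix (Fin n) (Fin n) ℝ} (hH : H.PosDef) (hankel_H : IsHankel H) :
    HasHankelApprox (4 * ((K + 1) * p)) (48 * (2 / 3) ^ p) H := by
  obtain ⟨w, x, hw, rfl⟩ := exists_eq_momentMatrix_of_posDef hH hankel_H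
  exact hasHankelApprox_momentMatrix hn p fun k _ => hw k

lemma exists_hankel_approx_of_posSemidef {K p : ℕ} (hn : n ≤ 2 ^ K) {κ : ℝ}
    (hκ : 48 * (2 / 3) ^ p < κ) {H : Matrix (Fin n) (Fin n) ℝ} (hH : H.PosSemidef)
    (hankel_H : IsHankel H) :
    ∃ M : Matrix (Fin n) (Fin n) ℝ, IsHankel M ∧ M.rank ≤ 4 * ((K + 1) * p) ∧
      specNorm (H - M) ≤ κ * specNorm H ∧ froNorm (H - M) ≤ κ * froNorm H := by
  rcases eq_or_ne H 0 with rfl | hH0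
  · have specNorm_zero : specNorm (0 : Matrix (Fin n) (Fin n) ℝ) = 0 := map_zero (specSeminorm n)
    have froNorm_zero : froNorm (0 : Matrix (Fin n) (Fin n) ℝ) = 0 := map_zero (froSeminorm n)
    exact ⟨0, hankel_H, by simp, by simp [specNorm_zero], by simp [froNorm_zero]⟩
  obtain ⟨P, hP, hankel_P⟩ := exists_posDef_isHankel n
  have eventually_spec_le := eventually_forall_le_of_perturbation_le (specSeminorm n)
    (specNorm_pos hH0) P (by positivity) hκ
  have eventually_fro_le := eventually_forall_le_of_perturbation_le (froSeminorm n)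
    (froNorm_pos hH0) P (by positivity) hκ
  obtain ⟨δ, hδ, spec_le, fro_le⟩ :=
    (eventually_mem_nhdsWithin.and (eventually_spec_le.and eventually_fro_le)).exists
  obtain ⟨M, hankel_M, rank_M, error_M⟩ := hasHankelApprox_of_posDef hn p
    (PosDef.posSemidef_add hH (hP.smul hδ)) (hankel_H.add (hankel_P.smul δ))
  exact ⟨M, hankel_M, rank_M, spec_le M (error_M _ (isMonotoneSeminorm_specSeminorm n)),
    fro_le M (error_M _ (isMonotoneSeminorm_froSeminorm n))⟩

end Perturbation

section Parameters

lemma clog_two_add_one_le_mul_log {n : ℕ} (hn : 2 ≤ n) :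
    (Nat.clog 2 n + 1 : ℝ) ≤ 5 * Real.log n := by
  have log_two_le : Real.log 2 ≤ Real.log n := by gcongr; exact_mod_cast hn
  have pred_mul_log_two_le : (Nat.clog 2 n - 1 : ℝ) * Real.log 2 ≤ Real.log n := by
    have clog_pos := Nat.clog_pos one_lt_two hn
    have pow_le : (2 : ℝ) ^ (Nat.clog 2 n - 1) ≤ n := by
      exact_mod_cast (Nat.pow_pred_clog_lt_self one_lt_two hn).le
    calc (Nat.clog 2 n - 1 : ℝ) * Real.log 2 = Real.log (2 ^ (Nat.clog 2 n - 1)) := by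
          rw [Real.log_pow, Nat.cast_pred clog_pos]
      _ ≤ Real.log n := Real.log_le_log (by positivity) pow_le
  have := Real.log_two_gt_d9
  nlinarith

lemma forty_eight_mul_two_thirds_pow_lt {ε : ℝ} (hε0 : 0 < ε) (hε : ε < 1 / 2) {p : ℕ}
    (hp : 21 * Real.log (1 / ε) ≤ p) : 48 * (2 / 3 : ℝ) ^ p < ε := by
  have two_thirds_le : (2 / 3 : ℝ) ≤ Real.exp (-(1 / 3)) := by
    linarith [Real.add_one_le_exp (-(1 / 3) : ℝ)]
  calc 48 * (2 / 3 : ℝ) ^ p ≤ 48 * Real.exp (-(1 / 3)) ^ p := by gcongr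
    _ = 48 * Real.exp (p * -(1 / 3)) := by rw [Real.exp_nat_mul]
    _ ≤ 48 * Real.exp (7 * Real.log ε) := by
      rw [one_div, Real.log_inv] at hp
      gcongr 48 * Real.exp ?_
      linarith
    _ = 48 * ε ^ 6 * ε := by
      rw [mul_comm 7, Real.exp_mul, Real.exp_log hε0]
      norm_cast
      ring
    _ ≤ 48 * (1 / 2) ^ 6 * ε := by gcongr
    _ < ε := by linarith

end Parameters

/-- There is an absolute constant `C > 0` such that every PSD Hankel matrix
`H ∈ ℝ^{n×n}` (for `n ≥ 2`, `ε ∈ (0,1/2)`) admits a Hankel approximation `Ĥ` of rank at most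
`C · ln n · ln (1/ε)` with `‖H − Ĥ‖₂ ≤ ε‖H‖₂` and `‖H − Ĥ‖_F ≤ ε‖H‖_F`. -/
theorem hankel_low_rank_approx_exists :
    ∃ C : ℝ, 0 < C ∧
      ∀ (n : ℕ), 2 ≤ n → ∀ ε : ℝ, 0 < ε → ε < 1 / 2 →
        ∀ H : Matrix (Fin n) (Fin n) ℝ, H.PosSemidef → IsHankel H →
          ∃ Hhat : Matrix (Fin n) (Fin n) ℝ, IsHankel Hhat ∧
            (Hhat.rank : ℝ) ≤ C * Real.log n * Real.log (1 / ε) ∧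
            specNorm (H - Hhat) ≤ ε * specNorm H ∧
            froNorm (H - Hhat) ≤ ε * froNorm H := by
  refine ⟨460, by norm_num, fun n hn ε hε0 hε H hH hankel_H => ?_⟩
  have log_ge : Real.log 2 ≤ Real.log (1 / ε) := by
    gcongr
    rw [le_div_iff₀ hε0]
    linarith
  have := Real.log_two_gt_d9
  set p := ⌈21 * Real.log (1 / ε)⌉₊
  have p_le : (p : ℝ) ≤ 23 * Real.log (1 / ε) := by
    linarith [Nat.ceil_lt_add_one (show 0 ≤ 21 * Real.log (1 / ε) by linarith)]
  obtain ⟨M, hankel_M, rank_M, spec_le, fro_le⟩ := exists_hankel_approx_of_posSemidef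
    (Nat.le_pow_clog one_lt_two n) (forty_eight_mul_two_thirds_pow_lt hε0 hε (Nat.le_ceil _))
    hH hankel_H
  refine ⟨M, hankel_M, ?_, spec_le, fro_le⟩
  calc (M.rank : ℝ) ≤ 4 * ((Nat.clog 2 n + 1) * p) := by exact_mod_cast rank_M
    _ ≤ 4 * ((5 * Real.log n) * (23 * Real.log (1 / ε))) := by
      gcongr
      exact clog_two_add_one_le_mul_log hn
    _ = 460 * Real.log n * Real.log (1 / ε) := by ring
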